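/- For every s-graphon μ, the shape C(μ) equals the weak closure of the union over k ∈ ℕ of the sets C̃(μ,k) = {μ_M : M ∈ C(μ,k)}. -/

import Mathlib

open MeasureTheory Topology Filter

noncomputable section

/-- The unit square `[0,1]²`. -/
abbrev Sq : Type := unitInterval × unitInterval

/-- Convergence of a sequence of subsets in the Vietoris topology
(upper + lower Vietoris convergence). -/
def VietorisTendsto {X : Type*} [TopologicalSpace X] (A : ℕ → Set X) (B : Set X) : Prop :=
  (∀ U : Set X, IsOpen U → B ⊆ U → ∀ᶠ n in atTop, A n ⊆ U) ∧
  (∀ U : Set X, IsOpen U → (B ∩ U).Nonempty → ∀ᶠ n in atTop, (A n ∩ U).Nonempty)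

/-- A measure on the unit square is symmetric if it is invariant under the coordinate swap. -/
def IsSymmSq (μ : Measure Sq) : Prop := μ.map Prod.swap = μ

/-- s-graphons: symmetric Borel probability measures on the unit square,
with the weak topology. -/
def SGraphon : Type := {μ : ProbabilityMeasure Sq // IsSymmSq (μ : Measure Sq)}

instance : TopologicalSpace SGraphon :=
  inferInstanceAs (TopologicalSpace {μ : ProbabilityMeasure Sq // IsSymmSq (μ : Measure Sq)})

/-- The underlying measure of an s-graphon. -/
def SGraphon.toMeasure (μ : SGraphon) : Measure Sq := (μ.1 : Measure Sq)

/-- A non-negative bounded Borel function on the unit square is fairly distributed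
if all its horizontal and vertical sections integrate (w.r.t. Lebesgue measure) to 1. -/
structure FairlyDistributed (f : Sq → ℝ) : Prop where
  measurable : Measurable f
  nonneg : ∀ p, 0 ≤ f p
  bounded : ∃ C : ℝ, ∀ p, f p ≤ C
  row : ∀ x : unitInterval, ∫ v, f (x, v) = 1
  col : ∀ y : unitInterval, ∫ u, f (u, y) = 1

/-- The density `φ(f,μ)`. -/
def phiFn (f : Sq → ℝ) (μ : Measure Sq) (p : Sq) : ℝ :=
  ∫ q, f (q.1, p.1) * f (q.2, p.2) ∂μ

/-- The measure `Φ(f,μ)`, with density `φ(f,μ)` w.r.t. 2-dimensional Lebesgue measure. -/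
def PhiMeas (f : Sq → ℝ) (μ : Measure Sq) : Measure Sq :=
  volume.withDensity fun p => ENNReal.ofReal (phiFn f μ p)

/-- The shape of a measure `μ` on the unit square: the weak closure of the set of
(s-graphons corresponding to) the measures `Φ(f,μ)`, `f` continuous fairly distributed. -/
def shapeM (μ : Measure Sq) : Set SGraphon :=
  closure {ν : SGraphon | ∃ f : Sq → ℝ, FairlyDistributed f ∧ Continuous f ∧
    ν.toMeasure = PhiMeas f μ}

/-- The shape `C(μ)` of an s-graphon. -/
def shape (μ : SGraphon) : Set SGraphon := shapeM μ.toMeasure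

/-- A fractional partition into `k` parts: non-negative Borel functions on `[0,1]`
summing to the constant function 1, each integrating to `1/k`. -/
def IsFracPartition (k : ℕ) (f : Fin k → unitInterval → ℝ) : Prop :=
  (∀ i, Measurable (f i)) ∧ (∀ i x, 0 ≤ f i x) ∧ (∀ x, ∑ i, f i x = 1) ∧
    ∀ i, ∫ x, f i x = 1 / k

/-- The `k`-shape `C(μ,k)`: the closure in `ℝ^{k×k}` of the set of density matrices of
fractional partitions into `k` parts. -/
def kShape (μ : Measure Sq) (k : ℕ) : Set (Matrix (Fin k) (Fin k) ℝ) :=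
  closure {M | ∃ f : Fin k → unitInterval → ℝ, IsFracPartition k f ∧
    ∀ i j, M i j = ∫ p, f i p.1 * f j p.2 ∂μ}

/-- `M_k^*`: symmetric `k×k` matrices with non-negative entries summing to 1. -/
def Mstar (k : ℕ) : Set (Matrix (Fin k) (Fin k) ℝ) :=
  {M | M.IsSymm ∧ (∀ i j, 0 ≤ M i j) ∧ ∑ i, ∑ j, M i j = 1}

/-- The index `i` (0-based) with `u ∈ [i/k, (i+1)/k)` (and `i = k-1` for `u = 1`). -/
def gridIdx (k : ℕ) (hk : 0 < k) (u : unitInterval) : Fin k :=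
  ⟨min ⌊(u : ℝ) * k⌋₊ (k - 1), lt_of_le_of_lt (min_le_right _ _) (Nat.sub_lt hk one_pos)⟩

/-- The measure `μ_M` associated to a `k×k` matrix `M`: its density w.r.t. 2-dimensional
Lebesgue measure equals `k² M(i,j)` on the square `[i/k,(i+1)/k) × [j/k,(j+1)/k)` (0-based). -/
def muM {k : ℕ} (M : Matrix (Fin k) (Fin k) ℝ) : Measure Sq :=
  if hk : 0 < k then
    volume.withDensity fun p =>
      ENNReal.ofReal ((k : ℝ) ^ 2 * M (gridIdx k hk p.1) (gridIdx k hk p.2))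
  else 0

/-- `C̃(μ,k)`: the `k`-shape of `μ`, interpreted as a set of s-graphons. -/
def kShapeTilde (μ : Measure Sq) (k : ℕ) : Set SGraphon :=
  {ν : SGraphon | ∃ M ∈ kShape μ k, ν.toMeasure = muM M}

/-- The interval `I_i = [i/k, (i+1)/k)` (0-based), with `I_{k-1} = [(k-1)/k, 1]`,
as a subset of `[0,1]`. -/
def Ik (k : ℕ) (i : Fin k) : Set unitInterval :=
  if (i : ℕ) + 1 = k then Subtype.val ⁻¹' Set.Icc (((i : ℕ) : ℝ) / k) 1
  else Subtype.val ⁻¹' Set.Ico (((i : ℕ) : ℝ) / k) ((((i : ℕ) : ℝ) + 1) / k)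

/-!
The map `f ↦ Φ(f,μ)` is continuous along uniformly bounded sequences of fairly distributed
functions that converge almost everywhere. For a fractional partition `f` with density matrix `M`,
the step measure `μ_M` is `Φ` of the kernel `k ∑ᵢ fᵢ(x) gᵢ(u)`, where `g` is the partition of
`[0,1]` into `k` equal intervals.

A continuous fairly distributed function is the pointwise limit of its averages over these
intervals, which are kernels of this form; hence every `Φ(f,μ)` with `f ∈ FDC` is a limit of step
measures. Conversely, both partitions in such a kernel are almost everywhere limits of continuous
fractional partitions, so every `μ_M` lies in the shape. Since the marginal of `μ` may be singular,
the first partition has to be approximated almost everywhere with respect to both this marginal and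
Lebesgue measure; the latter makes the integrals converge to `1 / k`, so that the correction needed
to restore them vanishes in the limit.
-/

namespace SGraphon

instance (μ : SGraphon) : IsProbabilityMeasure μ.toMeasure :=
  inferInstanceAs (IsProbabilityMeasure (μ.1 : Measure Sq))

lemma ext {μ ν : SGraphon} (h : μ.toMeasure = ν.toMeasure) : μ = ν :=
  Subtype.ext (Subtype.ext h)

lemma snd_toMeasure (μ : SGraphon) : μ.toMeasure.snd = μ.toMeasure.fst := by
  rw [← Measure.fst_map_swap, show μ.toMeasure.map Prod.swap = μ.toMeasure from μ.2]

end SGraphon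

section WeakConvergence

variable {ι : Type*} {l : Filter ι} [l.IsCountablyGenerated]

lemma tendsto_probabilityMeasure_of_tendsto_density {Ω : Type*} [TopologicalSpace Ω]
    [MeasurableSpace Ω] [OpensMeasurableSpace Ω] {m : Measure Ω} [IsFiniteMeasure m]
    {P : ι → ProbabilityMeasure Ω} {P₀ : ProbabilityMeasure Ω}
    {D : ι → Ω → ENNReal} {D₀ : Ω → ENNReal}
    (hD : ∀ i, Measurable (D i)) (hD₀ : Measurable D₀) {C : ENNReal} (hC : C ≠ ⊤)
    (hbound : ∀ᶠ i in l, ∀ᵐ x ∂m, D i x ≤ C)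
    (hlim : ∀ᵐ x ∂m, Tendsto (fun i => D i x) l (𝓝 (D₀ x)))
    (hP : ∀ i, (P i : Measure Ω) = m.withDensity (D i))
    (hP₀ : (P₀ : Measure Ω) = m.withDensity D₀) :
    Tendsto P l (𝓝 P₀) := by
  rw [ProbabilityMeasure.tendsto_iff_forall_lintegral_tendsto]
  intro g
  have hg : Measurable fun x => (g x : ENNReal) := g.continuous.measurable.coe_nnreal_ennreal
  simp only [hP, hP₀, lintegral_withDensity_eq_lintegral_mul _ (hD _) hg,
    lintegral_withDensity_eq_lintegral_mul _ hD₀ hg, Pi.mul_apply]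
  refine tendsto_lintegral_filter_of_dominated_convergence (fun _ => C * nndist g 0)
    (.of_forall fun i => (hD i).mul hg) ?_ ?_ ?_
  · filter_upwards [hbound] with i hi
    filter_upwards [hi] with x hx
    gcongr
    exact BoundedContinuousFunction.NNReal.upper_bound g x
  · rw [lintegral_const]
    finiteness
  · filter_upwards [hlim] with x hx
    exact ENNReal.Tendsto.mul_const hx (.inr ENNReal.coe_ne_top)

lemma SGraphon.tendsto_of_tendsto_density {ν : ι → SGraphon} {ν₀ : SGraphon}
    {d : ι → Sq → ℝ} {d₀ : Sq → ℝ} (hd : ∀ i, Measurable (d i)) (hd₀ : Measurable d₀)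
    {C : ℝ} (hbound : ∀ᶠ i in l, ∀ p, d i p ≤ C)
    (hlim : ∀ᵐ p, Tendsto (fun i => d i p) l (𝓝 (d₀ p)))
    (hν : ∀ i, (ν i).toMeasure = volume.withDensity fun p => ENNReal.ofReal (d i p))
    (hν₀ : ν₀.toMeasure = volume.withDensity fun p => ENNReal.ofReal (d₀ p)) :
    Tendsto ν l (𝓝 ν₀) := by
  have hval : IsInducing fun ν : SGraphon => ν.1 := IsInducing.subtypeVal
  rw [hval.tendsto_nhds_iff]
  refine tendsto_probabilityMeasure_of_tendsto_density (fun i => (hd i).ennreal_ofReal)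
    hd₀.ennreal_ofReal (ENNReal.ofReal_ne_top (r := C)) ?_ ?_ hν hν₀
  · filter_upwards [hbound] with i hi
    exact ae_of_all _ fun p => ENNReal.ofReal_le_ofReal (hi p)
  · filter_upwards [hlim] with p hp using ENNReal.tendsto_ofReal hp

end WeakConvergence

section Phi

variable {f : Sq → ℝ} {μ : Measure Sq}

lemma FairlyDistributed.norm_mul_le (hf : FairlyDistributed f) {C : ℝ} (hC : ∀ p, f p ≤ C)
    (p q : Sq) : ‖f p * f q‖ ≤ C * C := by
  rw [Real.norm_of_nonneg (mul_nonneg (hf.nonneg p) (hf.nonneg q))]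
  exact mul_le_mul (hC p) (hC q) (hf.nonneg q) ((hf.nonneg p).trans (hC p))

lemma phiFn_nonneg (hf : ∀ p, 0 ≤ f p) (p : Sq) : 0 ≤ phiFn f μ p :=
  integral_nonneg fun _ => mul_nonneg (hf _) (hf _)

lemma measurable_phiFn [SFinite μ] (hf : Measurable f) : Measurable (phiFn f μ) := by
  have h : Measurable fun z : Sq × Sq => f (z.2.1, z.1.1) * f (z.2.2, z.1.2) := by fun_prop
  exact h.stronglyMeasurable.integral_prod_right.measurable

lemma phiFn_swap (hμ : IsSymmSq μ) (hf : Measurable f) (p : Sq) :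
    phiFn f μ p.swap = phiFn f μ p := by
  unfold phiFn
  conv_lhs => rw [← hμ]
  rw [integral_map measurable_swap.aemeasurable (by fun_prop)]
  simp only [Prod.fst_swap, Prod.snd_swap, mul_comm]

lemma isSymmSq_phiMeas [SFinite μ] (hμ : IsSymmSq μ) (hf : Measurable f) :
    IsSymmSq (PhiMeas f μ) := by
  have hswap : MeasurePreserving (Prod.swap : Sq → Sq) := Measure.measurePreserving_swap
  ext s hs
  rw [Measure.map_apply measurable_swap hs, PhiMeas, withDensity_apply _ (measurable_swap hs),
    withDensity_apply _ hs, ← hswap.setLIntegral_comp_preimage hs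
      (measurable_phiFn hf).ennreal_ofReal]
  simp only [phiFn_swap hμ hf]

variable [IsProbabilityMeasure μ]

lemma phiFn_le (hf : FairlyDistributed f) {C : ℝ} (hC : ∀ p, f p ≤ C) (p : Sq) :
    phiFn f μ p ≤ C * C := by
  have h := norm_integral_le_of_norm_le_const (μ := μ)
    (ae_of_all _ fun q : Sq => hf.norm_mul_le hC (q.1, p.1) (q.2, p.2))
  rw [probReal_univ, mul_one] at h
  exact (le_abs_self _).trans h

lemma integrable_phiFn (hf : FairlyDistributed f) : Integrable (phiFn f μ) := by
  obtain ⟨C, hC⟩ := hf.bounded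
  refine .of_bound (measurable_phiFn hf.measurable).aestronglyMeasurable (C * C)
    (ae_of_all _ fun p => ?_)
  rw [Real.norm_of_nonneg (phiFn_nonneg hf.nonneg p)]
  exact phiFn_le hf hC p

lemma integral_phiFn (hf : FairlyDistributed f) : ∫ p, phiFn f μ p = 1 := by
  obtain ⟨C, hC⟩ := hf.bounded
  have hfm := hf.measurable
  have hmeas : Measurable fun z : Sq × Sq => f (z.2.1, z.1.1) * f (z.2.2, z.1.2) := by fun_prop
  have hinner (q : Sq) : ∫ p : Sq, f (q.1, p.1) * f (q.2, p.2) = 1 :=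
    calc ∫ p : Sq, f (q.1, p.1) * f (q.2, p.2) = (∫ u, f (q.1, u)) * ∫ v, f (q.2, v) :=
          integral_prod_mul (fun u => f (q.1, u)) fun v => f (q.2, v)
      _ = 1 := by rw [hf.row, hf.row, one_mul]
  calc ∫ p, phiFn f μ p = ∫ q, (∫ p : Sq, f (q.1, p.1) * f (q.2, p.2)) ∂μ :=
        integral_integral_swap <| .of_bound hmeas.aestronglyMeasurable (C * C)
          (ae_of_all _ fun _ => hf.norm_mul_le hC _ _)
    _ = 1 := by simp only [hinner, integral_const, probReal_univ, one_smul]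

lemma isProbabilityMeasure_phiMeas (hf : FairlyDistributed f) :
    IsProbabilityMeasure (PhiMeas f μ) where
  measure_univ := by
    rw [PhiMeas, withDensity_apply _ MeasurableSet.univ, Measure.restrict_univ,
      ← ofReal_integral_eq_lintegral_ofReal (integrable_phiFn hf)
        (ae_of_all _ (phiFn_nonneg hf.nonneg)), integral_phiFn hf, ENNReal.ofReal_one]

lemma tendsto_phiFn {ι : Type*} {l : Filter ι} [l.IsCountablyGenerated] {F : ι → Sq → ℝ}
    (hF : ∀ i, FairlyDistributed (F i)) {C : ℝ} (hC : ∀ i p, F i p ≤ C) {p : Sq}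
    (hfst : ∀ᵐ x ∂μ.fst, Tendsto (fun i => F i (x, p.1)) l (𝓝 (f (x, p.1))))
    (hsnd : ∀ᵐ y ∂μ.snd, Tendsto (fun i => F i (y, p.2)) l (𝓝 (f (y, p.2)))) :
    Tendsto (fun i => phiFn (F i) μ p) l (𝓝 (phiFn f μ p)) := by
  refine tendsto_integral_filter_of_dominated_convergence (fun _ => C * C)
    (.of_forall fun i => ?_)
    (.of_forall fun i => ae_of_all _ fun q => (hF i).norm_mul_le (hC i) _ _)
    (integrable_const _) ?_
  · have := (hF i).measurable
    exact (by fun_prop : Measurable _).aestronglyMeasurable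
  · filter_upwards [ae_of_ae_map measurable_fst.aemeasurable hfst,
      ae_of_ae_map measurable_snd.aemeasurable hsnd] with q h₁ h₂
    exact h₁.mul h₂

end Phi

namespace SGraphon

/-- The measure `Φ(f,μ)` as an s-graphon. -/
def phi (μ : SGraphon) {f : Sq → ℝ} (hf : FairlyDistributed f) : SGraphon :=
  ⟨⟨PhiMeas f μ.toMeasure, isProbabilityMeasure_phiMeas hf⟩, isSymmSq_phiMeas μ.2 hf.measurable⟩

lemma tendsto_phi (μ : SGraphon) {ι : Type*} {l : Filter ι} [l.IsCountablyGenerated]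
    {F : ι → Sq → ℝ} {f : Sq → ℝ} (hF : ∀ i, FairlyDistributed (F i)) (hf : FairlyDistributed f)
    {C : ℝ} (hC : ∀ i p, F i p ≤ C)
    (hlim : ∀ᵐ u : unitInterval, ∀ᵐ x ∂μ.toMeasure.fst,
      Tendsto (fun i => F i (x, u)) l (𝓝 (f (x, u)))) :
    Tendsto (fun i => μ.phi (hF i)) l (𝓝 (μ.phi hf)) := by
  refine tendsto_of_tendsto_density (fun i => measurable_phiFn (hF i).measurable)
    (measurable_phiFn hf.measurable) (.of_forall fun i => phiFn_le (hF i) (hC i)) ?_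
    (fun _ => rfl) rfl
  filter_upwards [Measure.quasiMeasurePreserving_fst.ae hlim,
    Measure.quasiMeasurePreserving_snd.ae hlim] with p hfst hsnd
  exact tendsto_phiFn hF hC hfst (by rwa [snd_toMeasure])

end SGraphon

section Grid

variable {k : ℕ}

lemma gridIdx_eq_iff (hk : 0 < k) {u : unitInterval} {i : Fin k} :
    gridIdx k hk u = i ↔ u ∈ Ik k i := by
  have hk' : (0 : ℝ) < k := by exact_mod_cast hk
  have huk : 0 ≤ (u : ℝ) * k := mul_nonneg u.2.1 hk'.le
  rw [Fin.ext_iff, gridIdx, Ik]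
  split_ifs with hi
  · rw [show (i : ℕ) = k - 1 by omega, min_eq_right_iff, Nat.le_floor_iff huk]
    simp [div_le_iff₀ hk', u.2.2]
  · have hik : (i : ℕ) < k - 1 := by omega
    rw [show min ⌊(u : ℝ) * k⌋₊ (k - 1) = i ↔ ⌊(u : ℝ) * k⌋₊ = i by omega, Nat.floor_eq_iff huk]
    simp [div_le_iff₀ hk', lt_div_iff₀ hk']

lemma measurableSet_Ik (i : Fin k) : MeasurableSet (Ik k i) := by
  unfold Ik
  split_ifs
  · exact measurableSet_Icc.preimage measurable_subtype_coe
  · exact measurableSet_Ico.preimage measurable_subtype_coe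

lemma measurable_gridIdx (hk : 0 < k) : Measurable (gridIdx k hk) := by
  refine measurable_to_countable' fun i => ?_
  convert measurableSet_Ik i using 1
  ext u
  exact gridIdx_eq_iff hk

lemma iUnion_Ik (hk : 0 < k) : ⋃ i : Fin k, Ik k i = Set.univ :=
  Set.iUnion_eq_univ_iff.2 fun u => ⟨gridIdx k hk u, (gridIdx_eq_iff hk).1 rfl⟩

lemma pairwise_disjoint_Ik : Pairwise (Function.onFun Disjoint (Ik k)) := fun i _ hij =>
  Set.disjoint_left.2 fun _ hi hj =>
    hij (((gridIdx_eq_iff i.pos).2 hi).symm.trans ((gridIdx_eq_iff i.pos).2 hj))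

lemma coe_mem_Icc_of_mem_Ik {u : unitInterval} {i : Fin k} (hu : u ∈ Ik k i) :
    (u : ℝ) ∈ Set.Icc ((i : ℝ) / k) ((i + 1) / k) := by
  unfold Ik at hu
  split_ifs at hu with hi
  · have hk : (i : ℝ) + 1 = k := by exact_mod_cast hi
    rw [hk, div_self (by exact_mod_cast i.pos.ne')]
    exact hu
  · exact Set.Ico_subset_Icc_self hu

lemma dist_le_of_mem_Ik {u v : unitInterval} {i : Fin k} (hu : u ∈ Ik k i) (hv : v ∈ Ik k i) :
    dist u v ≤ 1 / k := by
  refine (Real.dist_le_of_mem_Icc (coe_mem_Icc_of_mem_Ik hu) (coe_mem_Icc_of_mem_Ik hv)).trans_eq ?_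
  ring

lemma volume_real_Ik (i : Fin k) : (volume : Measure unitInterval).real (Ik k i) = 1 / k := by
  have hk : (0 : ℝ) < k := by exact_mod_cast i.pos
  have hi : (i : ℝ) + 1 ≤ k := by exact_mod_cast i.2
  have h₀ : 0 ≤ (i : ℝ) / k := by positivity
  have hvol {s : Set ℝ} (hs : s ⊆ Set.Icc 0 1) :
      (volume : Measure unitInterval).real (Subtype.val ⁻¹' s) = volume.real s := by
    rw [measureReal_def, unitInterval.volume_apply, Subtype.image_preimage_coe,
      Set.inter_eq_right.2 hs, measureReal_def]
  unfold Ik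
  split_ifs with hik
  · have hik' : (k : ℝ) = i + 1 := by exact_mod_cast hik.symm
    rw [hvol (Set.Icc_subset_Icc_left h₀),
      Real.volume_real_Icc_of_le ((div_le_one hk).2 (by linarith)), one_sub_div hk.ne', hik',
      add_sub_cancel_left]
  · have h₁ : ((i : ℝ) + 1) / k ≤ 1 := (div_le_one hk).2 hi
    rw [hvol (Set.Ico_subset_Icc_self.trans (Set.Icc_subset_Icc h₀ h₁)),
      Real.volume_real_Ico_of_le (by gcongr; linarith), ← sub_div, add_sub_cancel_left]

lemma sum_setIntegral_Ik (hk : 0 < k) {f : unitInterval → ℝ} (hf : Integrable f) :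
    ∑ i, ∫ v in Ik k i, f v = ∫ v, f v := by
  rw [← integral_iUnion_fintype measurableSet_Ik pairwise_disjoint_Ik fun _ => hf.integrableOn,
    iUnion_Ik hk, setIntegral_univ]

end Grid

lemma norm_apply_le_one_of_mem_stdSimplex {ι : Type*} [Fintype ι] {v : ι → ℝ}
    (hv : v ∈ stdSimplex ℝ ι) (i : ι) : ‖v i‖ ≤ 1 := by
  have hi := mem_Icc_of_mem_stdSimplex hv i
  rw [Real.norm_of_nonneg hi.1]
  exact hi.2

namespace IsFracPartition

variable {k : ℕ} {f : Fin k → unitInterval → ℝ}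

lemma measurable (hf : IsFracPartition k f) (i : Fin k) : Measurable (f i) := hf.1 i

lemma nonneg (hf : IsFracPartition k f) (i : Fin k) (x : unitInterval) : 0 ≤ f i x := hf.2.1 i x

lemma sum_eq_one (hf : IsFracPartition k f) (x : unitInterval) : ∑ i, f i x = 1 := hf.2.2.1 x

lemma integral_eq (hf : IsFracPartition k f) (i : Fin k) : ∫ x, f i x = 1 / k := hf.2.2.2 i

lemma pos (hf : IsFracPartition k f) : 0 < k := by
  rcases k.eq_zero_or_pos with rfl | hk
  · simpa using hf.sum_eq_one 0
  · exact hk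

lemma mem_stdSimplex (hf : IsFracPartition k f) (x : unitInterval) :
    (fun i => f i x) ∈ stdSimplex ℝ (Fin k) := ⟨fun i => hf.nonneg i x, hf.sum_eq_one x⟩

lemma le_one (hf : IsFracPartition k f) (i : Fin k) (x : unitInterval) : f i x ≤ 1 :=
  (mem_Icc_of_mem_stdSimplex (hf.mem_stdSimplex x) i).2

lemma integrable (hf : IsFracPartition k f) (i : Fin k) : Integrable (f i) :=
  .of_bound (hf.measurable i).aestronglyMeasurable 1 <| ae_of_all _ fun x =>
    norm_apply_le_one_of_mem_stdSimplex (hf.mem_stdSimplex x) i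

end IsFracPartition

/-- The fractional partition of `[0,1]` into the indicator functions of the intervals `Ik k i`. -/
def gridPartition (k : ℕ) (i : Fin k) : unitInterval → ℝ := (Ik k i).indicator 1

lemma gridPartition_apply {k : ℕ} (hk : 0 < k) (i : Fin k) (u : unitInterval) :
    gridPartition k i u = if gridIdx k hk u = i then 1 else 0 := by
  split_ifs with h
  · exact Set.indicator_of_mem ((gridIdx_eq_iff hk).1 h) 1
  · exact Set.indicator_of_notMem (mt (gridIdx_eq_iff hk).2 h) 1

lemma isFracPartition_gridPartition {k : ℕ} (hk : 0 < k) :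
    IsFracPartition k (gridPartition k) := by
  refine ⟨fun i => measurable_one.indicator (measurableSet_Ik i),
    fun i => Set.indicator_nonneg fun _ _ => zero_le_one, fun u => ?_, fun i => ?_⟩
  · simp only [gridPartition_apply hk, Finset.sum_ite_eq, Finset.mem_univ, if_true]
  · rw [gridPartition, integral_indicator_one (measurableSet_Ik i), volume_real_Ik]

/-- The kernel `(x,u) ↦ k ∑ᵢ fᵢ(x) gᵢ(u)` coupling two fractional partitions `f` and `g`.
With `g` the grid partition, `Φ` of this kernel is the step measure `μ_M` of the density
matrix `M` of `f`. -/
def partitionKernel {k : ℕ} (f g : Fin k → unitInterval → ℝ) (p : Sq) : ℝ :=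
  k * ∑ i, f i p.1 * g i p.2

section PartitionKernel

variable {k : ℕ} {f g : Fin k → unitInterval → ℝ}

lemma partitionKernel_le (hf : IsFracPartition k f) (hg : IsFracPartition k g) (p : Sq) :
    partitionKernel f g p ≤ k := by
  refine mul_le_of_le_one_right k.cast_nonneg ?_
  rw [← hf.sum_eq_one p.1]
  exact Finset.sum_le_sum fun i _ => mul_le_of_le_one_right (hf.nonneg i _) (hg.le_one i _)

lemma fairlyDistributed_partitionKernel (hf : IsFracPartition k f) (hg : IsFracPartition k g) :
    FairlyDistributed (partitionKernel f g) := by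
  have hk : (k : ℝ) ≠ 0 := by exact_mod_cast hf.pos.ne'
  have hfm := hf.measurable
  have hgm := hg.measurable
  refine ⟨?_, fun p => ?_, ⟨k, partitionKernel_le hf hg⟩, fun x => ?_, fun y => ?_⟩
  · unfold partitionKernel
    fun_prop
  · exact mul_nonneg k.cast_nonneg
      (Finset.sum_nonneg fun i _ => mul_nonneg (hf.nonneg i _) (hg.nonneg i _))
  · simp only [partitionKernel, integral_const_mul]
    rw [integral_finsetSum _ fun i _ => (hg.integrable i).const_mul _]
    simp only [integral_const_mul, hg.integral_eq]
    rw [← Finset.sum_mul, hf.sum_eq_one, one_mul, mul_one_div_cancel hk]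
  · simp only [partitionKernel, integral_const_mul]
    rw [integral_finsetSum _ fun i _ => (hf.integrable i).mul_const _]
    simp only [integral_mul_const, hf.integral_eq]
    rw [← Finset.mul_sum, hg.sum_eq_one, mul_one, mul_one_div_cancel hk]

lemma continuous_partitionKernel (hf : ∀ i, Continuous (f i)) (hg : ∀ i, Continuous (g i)) :
    Continuous (partitionKernel f g) := by
  unfold partitionKernel
  fun_prop

lemma partitionKernel_gridPartition (hk : 0 < k) (f : Fin k → unitInterval → ℝ) (p : Sq) :
    partitionKernel f (gridPartition k) p = k * f (gridIdx k hk p.2) p.1 := by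
  simp only [partitionKernel, gridPartition_apply hk, mul_ite, mul_one, mul_zero,
    Finset.sum_ite_eq, Finset.mem_univ, if_true]

end PartitionKernel

/-- The matrix with entries `∫ fᵢ(x) fⱼ(y) dμ(x,y)`; the `k`-shape of `μ` is the closure of the
set of the density matrices of fractional partitions into `k` parts. -/
def densityMatrix {k : ℕ} (μ : Measure Sq) (f : Fin k → unitInterval → ℝ) :
    Matrix (Fin k) (Fin k) ℝ :=
  Matrix.of fun i j => ∫ p, f i p.1 * f j p.2 ∂μ

lemma kShape_eq_closure_densityMatrix (μ : Measure Sq) (k : ℕ) :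
    kShape μ k = closure (densityMatrix μ '' {f | IsFracPartition k f}) := by
  unfold kShape
  congr 1
  ext M
  exact exists_congr fun f => and_congr_right fun _ =>
    ⟨fun h => Matrix.ext fun i j => (h i j).symm, fun h i j => h ▸ rfl⟩

lemma muM_densityMatrix {k : ℕ} (hk : 0 < k) (μ : Measure Sq) (f : Fin k → unitInterval → ℝ) :
    muM (densityMatrix μ f) = PhiMeas (partitionKernel f (gridPartition k)) μ := by
  rw [muM, dif_pos hk, PhiMeas]
  congr 1
  funext p
  simp only [phiFn, partitionKernel_gridPartition hk, densityMatrix, Matrix.of_apply]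
  rw [← integral_const_mul]
  congr 2
  funext q
  ring

lemma SGraphon.tendsto_of_toMeasure_eq_muM {ι : Type*} {l : Filter ι} [l.IsCountablyGenerated]
    {k : ℕ} (hk : 0 < k) {N : ι → Matrix (Fin k) (Fin k) ℝ} {M : Matrix (Fin k) (Fin k) ℝ}
    (hN : Tendsto N l (𝓝 M)) {ν : ι → SGraphon} {ν₀ : SGraphon}
    (hν : ∀ n, (ν n).toMeasure = muM (N n)) (hν₀ : ν₀.toMeasure = muM M) :
    Tendsto ν l (𝓝 ν₀) := by
  have hentry (i j : Fin k) : Tendsto (fun n => N n i j) l (𝓝 (M i j)) :=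
    tendsto_pi_nhds.1 (tendsto_pi_nhds.1 hN i) j
  obtain ⟨C, hC⟩ : ∃ C, ∀ i j, M i j < C := by
    obtain ⟨C, hC⟩ := (Set.finite_range (Function.uncurry M)).bddAbove
    exact ⟨C + 1, fun i j => (hC ⟨(i, j), rfl⟩).trans_lt (lt_add_one C)⟩
  have hbound : ∀ᶠ n in l, ∀ i j, N n i j ≤ C :=
    eventually_all.2 fun i => eventually_all.2 fun j => (hentry i j).eventually_le_const (hC i j)
  have hmeas (M : Matrix (Fin k) (Fin k) ℝ) : Measurable fun p : Sq =>
      (k : ℝ) ^ 2 * M (gridIdx k hk p.1) (gridIdx k hk p.2) := by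
    have hM : Measurable fun ij : Fin k × Fin k => M ij.1 ij.2 := measurable_of_finite _
    exact (hM.comp ((measurable_gridIdx hk).prodMap (measurable_gridIdx hk))).const_mul _
  simp only [muM, dif_pos hk] at hν hν₀
  refine tendsto_of_tendsto_density (fun n => hmeas (N n)) (hmeas M) (C := (k : ℝ) ^ 2 * C) ?_
    (ae_of_all _ fun p => (hentry _ _).const_mul _) hν hν₀
  filter_upwards [hbound] with n hn p
  gcongr
  exact hn _ _

/-- The fractional partition of `[0,1]` obtained by integrating a fairly distributed `f` in its
second variable over each of the intervals `Ik k i`. -/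
def cellIntegral (f : Sq → ℝ) (k : ℕ) (i : Fin k) (x : unitInterval) : ℝ :=
  ∫ v in Ik k i, f (x, v)

section CellIntegral

variable {f : Sq → ℝ}

lemma FairlyDistributed.integrable_row (hf : FairlyDistributed f) (x : unitInterval) :
    Integrable fun v => f (x, v) :=
  .of_integral_ne_zero (by rw [hf.row]; exact one_ne_zero)

lemma isFracPartition_cellIntegral (hf : FairlyDistributed f) {k : ℕ} (hk : 0 < k) :
    IsFracPartition k (cellIntegral f k) := by
  obtain ⟨C, hC⟩ := hf.bounded
  refine ⟨fun i => ?_, fun i x => integral_nonneg fun v => hf.nonneg _, fun x => ?_, fun i => ?_⟩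
  · have h : StronglyMeasurable (Function.uncurry fun x v : unitInterval => f (x, v)) :=
      hf.measurable.stronglyMeasurable
    exact h.integral_prod_right.measurable
  · exact (sum_setIntegral_Ik hk (hf.integrable_row x)).trans (hf.row x)
  · calc ∫ x, cellIntegral f k i x = ∫ v in Ik k i, ∫ x, f (x, v) :=
          integral_integral_swap <| .of_bound hf.measurable.aestronglyMeasurable C
            (ae_of_all _ fun p => (Real.norm_of_nonneg (hf.nonneg p)).trans_le (hC p))
      _ = 1 / k := by simp only [hf.col, setIntegral_const, smul_eq_mul, mul_one, volume_real_Ik]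

lemma partitionKernel_cellIntegral_le {k : ℕ} (hk : 0 < k) (hf : FairlyDistributed f) {C : ℝ}
    (hC : ∀ p, f p ≤ C) (p : Sq) :
    partitionKernel (cellIntegral f k) (gridPartition k) p ≤ C := by
  have hk' : (k : ℝ) ≠ 0 := by exact_mod_cast hk.ne'
  rw [partitionKernel_gridPartition hk]
  calc (k : ℝ) * cellIntegral f k (gridIdx k hk p.2) p.1
      ≤ k * ∫ _ in Ik k (gridIdx k hk p.2), C := by
        refine mul_le_mul_of_nonneg_left ?_ k.cast_nonneg
        exact integral_mono (hf.integrable_row _).integrableOn (integrable_const _) fun _ => hC _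
    _ = C := by rw [setIntegral_const, volume_real_Ik, smul_eq_mul, ← mul_assoc,
        mul_one_div_cancel hk', one_mul]

lemma tendsto_Ik_gridIdx_smallSets (u : unitInterval) :
    Tendsto (fun n : ℕ => Ik (n + 1) (gridIdx (n + 1) n.succ_pos u)) atTop (𝓝 u).smallSets := by
  refine tendsto_smallSets_iff.2 fun s hs => ?_
  obtain ⟨ε, hε, hball⟩ := Metric.mem_nhds_iff.1 hs
  filter_upwards [tendsto_one_div_add_atTop_nhds_zero_nat.eventually_lt_const hε] with n hn v hv
  refine hball ((dist_le_of_mem_Ik hv ((gridIdx_eq_iff n.succ_pos).1 rfl)).trans_lt ?_)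
  exact_mod_cast hn

lemma tendsto_partitionKernel_cellIntegral (hf : Continuous f) (p : Sq) :
    Tendsto (fun n : ℕ => partitionKernel (cellIntegral f (n + 1)) (gridPartition (n + 1)) p)
      atTop (𝓝 (f p)) := by
  have hrow : Continuous fun v => f (p.1, v) := by fun_prop
  have h := (hrow.continuousAt.integral_sub_linear_isLittleO_ae (μ := volume)
    hrow.stronglyMeasurable.stronglyMeasurableAtFilter
    (tendsto_Ik_gridIdx_smallSets p.2)).tendsto_div_nhds_zero.add_const (f p)
  rw [zero_add] at h
  refine h.congr fun n => ?_
  rw [partitionKernel_gridPartition n.succ_pos, volume_real_Ik, smul_eq_mul, cellIntegral]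
  field_simp
  ring

end CellIntegral

theorem shape_subset_closure_iUnion_kShapeTilde (μ : SGraphon) :
    shape μ ⊆ closure (⋃ k ∈ {k : ℕ | 0 < k}, kShapeTilde μ.toMeasure k) := by
  refine closure_minimal ?_ isClosed_closure
  rintro ν ⟨f, hf, hfc, hν⟩
  obtain rfl : ν = μ.phi hf := SGraphon.ext hν
  obtain ⟨C, hC⟩ := hf.bounded
  have hpart (n : ℕ) := isFracPartition_cellIntegral hf n.succ_pos
  have hfair (n : ℕ) := fairlyDistributed_partitionKernel (hpart n)
    (isFracPartition_gridPartition n.succ_pos)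
  have hlim : Tendsto (fun n => μ.phi (hfair n)) atTop (𝓝 (μ.phi hf)) :=
    μ.tendsto_phi hfair hf (fun n => partitionKernel_cellIntegral_le n.succ_pos hf hC) <|
      ae_of_all _ fun u => ae_of_all _ fun x => tendsto_partitionKernel_cellIntegral hfc (x, u)
  refine mem_closure_of_tendsto hlim (.of_forall fun n => Set.mem_biUnion n.succ_pos ?_)
  refine ⟨densityMatrix μ.toMeasure (cellIntegral f (n + 1)), ?_,
    (muM_densityMatrix n.succ_pos _ _).symm⟩
  rw [kShape_eq_closure_densityMatrix]
  exact subset_closure (Set.mem_image_of_mem _ (hpart n))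

section Approximation

variable {X : Type*} [TopologicalSpace X] [NormalSpace X] [MeasurableSpace X] [BorelSpace X]
  {ρ : Measure X} [ρ.WeaklyRegular]

lemma exists_seq_continuous_tendsto_ae {E : Type*} [NormedAddCommGroup E] [NormedSpace ℝ E]
    {f : X → E} (hf : Integrable f ρ) :
    ∃ g : ℕ → X → E, (∀ n, Continuous (g n)) ∧
      ∀ᵐ x ∂ρ, Tendsto (fun n => g n x) atTop (𝓝 (f x)) := by
  have happrox (n : ℕ) := (memLp_one_iff_integrable.2 hf).exists_boundedContinuous_eLpNorm_sub_le
    ENNReal.one_ne_top (ENNReal.inv_ne_zero.2 (ENNReal.natCast_ne_top n))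
  choose g hgf hg using happrox
  have hL1 : Tendsto (fun n => eLpNorm (⇑(g n) - f) 1 ρ) atTop (𝓝 0) := by
    refine tendsto_of_tendsto_of_tendsto_of_le_of_le tendsto_const_nhds
      ENNReal.tendsto_inv_nat_nhds_zero (fun _ => zero_le) fun n => ?_
    exact (eLpNorm_sub_comm _ _ _ _).trans_le (hgf n)
  obtain ⟨ns, -, hns⟩ := (tendstoInMeasure_of_tendsto_eLpNorm one_ne_zero
    (fun n => (hg n).aestronglyMeasurable) hf.aestronglyMeasurable hL1).exists_seq_tendsto_ae
  exact ⟨fun n => g (ns n), fun n => (g (ns n)).continuous, hns⟩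

/-- A continuous retraction of `ι → ℝ` onto the standard simplex: scale the positive part down to
total mass at most `1`, then distribute the missing mass evenly. -/
def simplexRetraction {ι : Type*} [Fintype ι] (v : ι → ℝ) (i : ι) : ℝ :=
  max (v i) 0 / max 1 (∑ j, max (v j) 0) +
    (1 - (∑ j, max (v j) 0) / max 1 (∑ j, max (v j) 0)) / Fintype.card ι

section SimplexRetraction

variable {ι : Type*} [Fintype ι]

lemma continuous_simplexRetraction : Continuous (simplexRetraction : (ι → ℝ) → ι → ℝ) := by
  have hne (v : ι → ℝ) : max 1 (∑ j, max (v j) 0) ≠ 0 :=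
    (zero_lt_one.trans_le (le_max_left _ _)).ne'
  unfold simplexRetraction
  fun_prop (disch := exact hne)

lemma simplexRetraction_mem_stdSimplex [Nonempty ι] (v : ι → ℝ) :
    simplexRetraction v ∈ stdSimplex ℝ ι := by
  have hs : 0 < max 1 (∑ j, max (v j) 0) := zero_lt_one.trans_le (le_max_left _ _)
  refine ⟨fun i => ?_, ?_⟩
  · exact add_nonneg (div_nonneg (le_max_right _ _) hs.le)
      (div_nonneg (sub_nonneg.2 ((div_le_one hs).2 (le_max_right _ _))) (Nat.cast_nonneg _))
  · simp only [simplexRetraction]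
    rw [Finset.sum_add_distrib, ← Finset.sum_div, Finset.sum_const, Finset.card_univ, nsmul_eq_mul,
      mul_div_cancel₀ _ (by exact_mod_cast Fintype.card_ne_zero), add_sub_cancel]

lemma simplexRetraction_of_mem {v : ι → ℝ} (hv : v ∈ stdSimplex ℝ ι) :
    simplexRetraction v = v := by
  funext i
  simp [simplexRetraction, max_eq_left (hv.1 _), hv.2]

end SimplexRetraction

lemma exists_seq_continuous_mem_stdSimplex_tendsto_ae [IsFiniteMeasure ρ] {ι : Type*} [Fintype ι]
    {f : X → ι → ℝ} (hf : Measurable f) (hmem : ∀ x, f x ∈ stdSimplex ℝ ι) :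
    ∃ g : ℕ → X → ι → ℝ, (∀ n, Continuous (g n)) ∧ (∀ n x, g n x ∈ stdSimplex ℝ ι) ∧
      ∀ᵐ x ∂ρ, Tendsto (fun n => g n x) atTop (𝓝 (f x)) := by
  have hint : Integrable f ρ := .of_bound hf.aestronglyMeasurable 1 <| ae_of_all _ fun x =>
    (pi_norm_le_iff_of_nonneg zero_le_one).2 (norm_apply_le_one_of_mem_stdSimplex (hmem x))
  obtain ⟨g, hgc, hg⟩ := exists_seq_continuous_tendsto_ae hint
  refine ⟨fun n x => simplexRetraction (g n x), fun n => continuous_simplexRetraction.comp (hgc n),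
    fun n x => ?_, ?_⟩
  · have : Nonempty ι := by
      by_contra h
      rw [not_nonempty_iff] at h
      simpa using (hmem x).2
    exact simplexRetraction_mem_stdSimplex _
  · filter_upwards [hg] with x hx
    simpa only [Function.comp_def, simplexRetraction_of_mem (hmem x)] using
      (continuous_simplexRetraction.tendsto (f x)).comp hx

end Approximation

/-- The excess of the integral of `hᵢ` over the value `1 / k` required of a fractional partition. -/
def massExcess {k : ℕ} (h : Fin k → unitInterval → ℝ) (i : Fin k) : ℝ := (∫ x, h i x) - 1 / k

/-- The correction of a partition `h` of unity on `[0,1]` to a fractional partition: add a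
nonnegative constant to each `hᵢ` so that all integrals become equal, then rescale. -/
def equalizeMass {k : ℕ} (h : Fin k → unitInterval → ℝ) (i : Fin k) (x : unitInterval) : ℝ :=
  (h i x + (∑ j, |massExcess h j| - massExcess h i)) / (1 + k * ∑ j, |massExcess h j|)

section EqualizeMass

variable {k : ℕ} {h : Fin k → unitInterval → ℝ}

lemma isFracPartition_equalizeMass (hmeas : ∀ i, Measurable (h i))
    (hmem : ∀ x, (fun i => h i x) ∈ stdSimplex ℝ (Fin k)) : IsFracPartition k (equalizeMass h) := by
  have hint (i : Fin k) : Integrable (h i) :=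
    .of_bound (hmeas i).aestronglyMeasurable 1 <| ae_of_all _ fun x =>
      norm_apply_le_one_of_mem_stdSimplex (hmem x) i
  have hk : (k : ℝ) ≠ 0 := by
    rintro hk
    obtain rfl : k = 0 := by exact_mod_cast hk
    simpa using (hmem 0).2
  have hexcess : ∑ i, massExcess h i = 0 := by
    simp only [massExcess]
    rw [Finset.sum_sub_distrib, ← integral_finsetSum _ fun i _ => hint i,
      integral_congr_ae (ae_of_all _ fun x => (hmem x).2)]
    simp [hk]
  have hden : 0 < 1 + k * ∑ j, |massExcess h j| := by positivity
  refine ⟨fun i => ?_, fun i x => ?_, fun x => ?_, fun i => ?_⟩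
  · have := hmeas i
    unfold equalizeMass
    fun_prop
  · refine div_nonneg (add_nonneg ((hmem x).1 i) (sub_nonneg.2 ?_)) hden.le
    exact (le_abs_self _).trans
      (Finset.single_le_sum (fun j _ => abs_nonneg (massExcess h j)) (Finset.mem_univ i))
  · simp only [equalizeMass]
    rw [← Finset.sum_div, Finset.sum_add_distrib, Finset.sum_sub_distrib, (hmem x).2, hexcess,
      sub_zero, Finset.sum_const, Finset.card_univ, Fintype.card_fin, nsmul_eq_mul,
      div_self hden.ne']
  · have hmass : ∫ x, h i x = massExcess h i + 1 / k := by rw [massExcess, sub_add_cancel]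
    simp only [equalizeMass]
    rw [integral_div, integral_add (hint i) (integrable_const _), hmass, integral_const,
      probReal_univ, one_smul, div_eq_iff hden.ne']
    field_simp
    ring

lemma continuous_equalizeMass {i : Fin k} (hi : Continuous (h i)) :
    Continuous (equalizeMass h i) := by
  unfold equalizeMass
  fun_prop

lemma tendsto_equalizeMass {ι : Type*} {l : Filter ι} {H : ι → Fin k → unitInterval → ℝ}
    (hmass : ∀ i, Tendsto (fun n => ∫ x, H n i x) l (𝓝 (1 / k))) {i : Fin k} {x : unitInterval}
    {c : ℝ} (hx : Tendsto (fun n => H n i x) l (𝓝 c)) :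
    Tendsto (fun n => equalizeMass (H n) i x) l (𝓝 c) := by
  have hexcess (j : Fin k) : Tendsto (fun n => massExcess (H n) j) l (𝓝 0) := by
    simpa only [massExcess, sub_self] using (hmass j).sub_const (1 / (k : ℝ))
  have htotal : Tendsto (fun n => ∑ j, |massExcess (H n) j|) l (𝓝 0) := by
    simpa using tendsto_finsetSum Finset.univ fun j _ => (hexcess j).abs
  have hlim := (hx.add (htotal.sub (hexcess i))).div ((htotal.const_mul (k : ℝ)).const_add 1)
    (by rw [mul_zero, add_zero]; exact one_ne_zero)
  simp only [sub_zero, add_zero, mul_zero, div_one] at hlim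
  exact hlim

end EqualizeMass

lemma IsFracPartition.exists_seq_continuous_tendsto_ae {k : ℕ} {f : Fin k → unitInterval → ℝ}
    (hf : IsFracPartition k f) (ρ : Measure unitInterval) [IsFiniteMeasure ρ] :
    ∃ g : ℕ → Fin k → unitInterval → ℝ, (∀ n, IsFracPartition k (g n)) ∧
      (∀ n i, Continuous (g n i)) ∧
      ∀ᵐ x ∂ρ, ∀ i, Tendsto (fun n => g n i x) atTop (𝓝 (f i x)) := by
  obtain ⟨h, hhc, hmem, hh⟩ := exists_seq_continuous_mem_stdSimplex_tendsto_ae (ρ := ρ + volume)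
    (measurable_pi_lambda (fun x i => f i x) hf.measurable)
    hf.mem_stdSimplex
  have hc (n : ℕ) (i : Fin k) : Continuous fun x => h n x i := (continuous_apply i).comp (hhc n)
  obtain ⟨hρ, hvol⟩ := ae_add_measure_iff.1 hh
  have hmass (i : Fin k) : Tendsto (fun n => ∫ x, h n x i) atTop (𝓝 (1 / k)) := by
    rw [← hf.integral_eq i]
    refine tendsto_integral_of_dominated_convergence (fun _ => 1)
      (fun n => (hc n i).aestronglyMeasurable) (integrable_const _)
      (fun n => ae_of_all _ fun x => norm_apply_le_one_of_mem_stdSimplex (hmem n x) i) ?_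
    filter_upwards [hvol] with x hx using tendsto_pi_nhds.1 hx i
  refine ⟨fun n => equalizeMass fun i x => h n x i,
    fun n => isFracPartition_equalizeMass (fun i => (hc n i).measurable) (hmem n),
    fun n i => continuous_equalizeMass (hc n i), ?_⟩
  filter_upwards [hρ] with x hx i using tendsto_equalizeMass hmass (tendsto_pi_nhds.1 hx i)

lemma SGraphon.phi_partitionKernel_mem_shape (μ : SGraphon) {k : ℕ}
    {f g : Fin k → unitInterval → ℝ} (hf : IsFracPartition k f) (hg : IsFracPartition k g) :
    μ.phi (fairlyDistributed_partitionKernel hf hg) ∈ shape μ := by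
  obtain ⟨F, hF, hFc, hFlim⟩ := hf.exists_seq_continuous_tendsto_ae μ.toMeasure.fst
  obtain ⟨G, hG, hGc, hGlim⟩ := hg.exists_seq_continuous_tendsto_ae volume
  have hfair (n : ℕ) := fairlyDistributed_partitionKernel (hF n) (hG n)
  have hlim : Tendsto (fun n => μ.phi (hfair n)) atTop
      (𝓝 (μ.phi (fairlyDistributed_partitionKernel hf hg))) := by
    refine μ.tendsto_phi hfair _ (fun n => partitionKernel_le (hF n) (hG n)) ?_
    filter_upwards [hGlim] with u hu
    filter_upwards [hFlim] with x hx
    exact (tendsto_finsetSum _ fun i _ => (hx i).mul (hu i)).const_mul _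
  exact mem_closure_of_tendsto hlim <| .of_forall fun n =>
    ⟨_, hfair n, continuous_partitionKernel (hFc n) (hGc n), rfl⟩

theorem kShapeTilde_subset_shape (μ : SGraphon) {k : ℕ} (hk : 0 < k) :
    kShapeTilde μ.toMeasure k ⊆ shape μ := by
  rintro ν ⟨M, hM, hν⟩
  have : FrechetUrysohnSpace (Matrix (Fin k) (Fin k) ℝ) :=
    inferInstanceAs (FrechetUrysohnSpace (Fin k → Fin k → ℝ))
  rw [kShape_eq_closure_densityMatrix] at hM
  obtain ⟨N, hN, hlim⟩ := mem_closure_iff_seq_limit.1 hM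
  choose f hf hfN using hN
  have hgrid := isFracPartition_gridPartition hk
  refine isClosed_closure.mem_of_tendsto
    (SGraphon.tendsto_of_toMeasure_eq_muM hk hlim (fun n => ?_) hν)
    (.of_forall fun n => μ.phi_partitionKernel_mem_shape (hf n) hgrid)
  rw [← hfN n, muM_densityMatrix hk]
  rfl

/-- Lemma `lem:shapes-a`. For every s-graphon `μ`, the shape `C(μ)` equals the
weak closure of the union of the sets `C̃(μ,k) = {μ_M : M ∈ C(μ,k)}`, `k ∈ ℕ`. -/
theorem stmt1 (μ : SGraphon) :
    shape μ = closure (⋃ k ∈ {k : ℕ | 0 < k}, kShapeTilde μ.toMeasure k) :=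
  (shape_subset_closure_iUnion_kShapeTilde μ).antisymm <|
    closure_minimal (Set.iUnion₂_subset fun _ hk => kShapeTilde_subset_shape μ hk) isClosed_closure

end
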